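/- Let k ≥ 2 and d₀ ≥ 1. Suppose for all n' ≤ n there exists no quaternary Hermitian LCD [n',k,d'] code with d' ≥ d₀ and Hermitian dual distance ≥ 2. Then there exists no quaternary Hermitian LCD [n,k,d] code with d ≥ d₀ (regardless of dual distance). -/

import Mathlib

open Finset Matrix

/-- The Hermitian inner product `(x, y)_h = ∑ i, x i * (y i)^q` on `F^n`. -/
def hermInner {F : Type*} [Field F] (q : ℕ) {n : ℕ} (x y : Fin n → F) : F :=
  ∑ i, x i * (y i) ^ q

/-- The Hermitian dual code `C^{⊥h}`. -/
def hermDual {F : Type*} [Field F] (q : ℕ) {n : ℕ} (C : Submodule F (Fin n → F)) :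
    Submodule F (Fin n → F) where
  carrier := {x | ∀ y ∈ C, hermInner q x y = 0}
  add_mem' := by
    intro a b ha hb y hy
    have h1 := ha y hy
    have h2 := hb y hy
    simp only [hermInner] at *
    rw [show (∑ i, (a + b) i * y i ^ q)
        = (∑ i, a i * y i ^ q) + ∑ i, b i * y i ^ q by
      rw [← Finset.sum_add_distrib]
      exact Finset.sum_congr rfl fun i _ => by simp [add_mul]]
    rw [h1, h2, add_zero]
  zero_mem' := by
    intro y hy
    simp [hermInner]
  smul_mem' := by
    intro c a ha y hy
    have h1 := ha y hy
    simp only [hermInner] at *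
    rw [show (∑ i, (c • a) i * y i ^ q) = c * ∑ i, a i * y i ^ q by
      rw [Finset.mul_sum]
      exact Finset.sum_congr rfl fun i _ => by simp [mul_assoc]]
    rw [h1, mul_zero]

/-- A code is Hermitian LCD if `C ∩ C^{⊥h} = {0}`. -/
def IsHermLCD {F : Type*} [Field F] (q : ℕ) {n : ℕ} (C : Submodule F (Fin n → F)) : Prop :=
  C ⊓ hermDual q C = ⊥

/-- Hamming weight: number of nonzero coordinates. -/
noncomputable def wt {F : Type*} [Field F] {n : ℕ} (x : Fin n → F) : ℕ :=
  Nat.card {i // x i ≠ 0}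

/-- `C` has minimum weight `d`. -/
def minWt {F : Type*} [Field F] {n : ℕ} (C : Submodule F (Fin n → F)) (d : ℕ) : Prop :=
  (∃ c ∈ C, c ≠ 0 ∧ wt c = d) ∧ ∀ c ∈ C, c ≠ 0 → d ≤ wt c

/-- The Hermitian dual distance of `C` is at least 2. -/
def dualDistGeTwo {F : Type*} [Field F] (q : ℕ) {n : ℕ} (C : Submodule F (Fin n → F)) : Prop :=
  ∀ x ∈ hermDual q C, x ≠ 0 → 2 ≤ wt x

/-- The Hermitian dual distance of `C` equals 1, i.e. `C^{⊥h}` contains a weight-one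
vector. -/
def dualDistOne {F : Type*} [Field F] (q : ℕ) {n : ℕ} (C : Submodule F (Fin n → F)) : Prop :=
  ∃ x ∈ hermDual q C, wt x = 1

/-! If no coordinate vanishes identically on a code, then its dual contains no word of weight one.
Deleting the coordinates that do vanish identically changes neither the weights of codewords nor
the Hermitian products between them, so it preserves the dimension, the LCD property and the
minimum weight; a single such puncturing therefore suffices. -/

theorem eq_zero_of_comp_eq_zero {ι κ M : Type*} [Zero M] {e : ι → κ} {x : κ → M}
    (hx : Function.support x ⊆ Set.range e) (h : x ∘ e = 0) : x = 0 := by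
  rw [← Function.support_eq_empty_iff, Set.eq_empty_iff_forall_notMem]
  intro i hi
  obtain ⟨j, rfl⟩ := hx hi
  exact hi (congrFun h j)

section Words

variable {F : Type*} [Field F] {q m n : ℕ}

theorem wt_eq_ncard_support (x : Fin n → F) : wt x = (Function.support x).ncard := rfl

theorem wt_pos {x : Fin n → F} (hx : x ≠ 0) : 0 < wt x := by
  rw [wt_eq_ncard_support, Set.ncard_pos]
  exact Function.support_nonempty_iff.mpr hx

theorem wt_comp_of_support_subset_range {e : Fin m → Fin n} (he : Function.Injective e)
    {x : Fin n → F} (hx : Function.support x ⊆ Set.range e) : wt (x ∘ e) = wt x :=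
  Set.ncard_preimage_of_injective_subset_range he hx

theorem hermInner_comp_of_support_subset_range {e : Fin m → Fin n} (he : Function.Injective e)
    {x : Fin n → F} (hx : Function.support x ⊆ Set.range e) (y : Fin n → F) :
    hermInner q (x ∘ e) (y ∘ e) = hermInner q x y := by
  refine Fintype.sum_of_injective e he _ _ (fun i hi => ?_) fun _ => rfl
  rw [Function.notMem_support.mp fun h => hi (hx h), zero_mul]

theorem hermInner_of_support_subset_singleton {x : Fin n → F} {i : Fin n}
    (hx : Function.support x ⊆ {i}) (y : Fin n → F) : hermInner q x y = x i * y i ^ q := by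
  refine Fintype.sum_eq_single i fun j hj => ?_
  rw [Function.notMem_support.mp fun h => hj (hx h), zero_mul]

end Words

section Codes

variable {F : Type*} [Field F] {q m n d : ℕ}

/-- The support of a code: the set of coordinates at which some codeword is nonzero. -/
def codeSupport (C : Submodule F (Fin n → F)) : Set (Fin n) :=
  {i | ∃ x ∈ C, x i ≠ 0}

/-- The punctured code `{x ∘ e | x ∈ C}`: `e` lists the coordinates that are kept, so that the
deleted ones are those outside its range. -/
def puncture (e : Fin m → Fin n) (C : Submodule F (Fin n → F)) : Submodule F (Fin m → F) :=
  C.map (LinearMap.funLeft F F e)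

theorem support_subset_codeSupport {C : Submodule F (Fin n → F)} {x : Fin n → F} (hx : x ∈ C) :
    Function.support x ⊆ codeSupport C :=
  fun _ hi => ⟨x, hx, hi⟩

theorem codeSupport_puncture (e : Fin m → Fin n) (C : Submodule F (Fin n → F)) :
    codeSupport (puncture e C) = e ⁻¹' codeSupport C := by
  ext i
  simp [codeSupport, puncture, LinearMap.funLeft_apply]

theorem dualDistGeTwo_of_codeSupport_eq_univ {C : Submodule F (Fin n → F)}
    (hC : codeSupport C = Set.univ) : dualDistGeTwo q C := by
  intro x hx hx0
  by_contra! hlt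
  have hwt : wt x = 1 := by have := wt_pos hx0; omega
  obtain ⟨i, hi⟩ := Set.ncard_eq_one.mp hwt
  obtain ⟨y, hy, hyi⟩ : i ∈ codeSupport C := hC ▸ Set.mem_univ i
  have hxi : x i ≠ 0 := hi.ge rfl
  have hxy : x i * y i ^ q = 0 := hermInner_of_support_subset_singleton hi.le y ▸ hx y hy
  exact mul_ne_zero hxi (pow_ne_zero q hyi) hxy

theorem finrank_puncture {e : Fin m → Fin n} {C : Submodule F (Fin n → F)}
    (hC : codeSupport C ⊆ Set.range e) :
    Module.finrank F (puncture e C) = Module.finrank F C := by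
  have hinj : Function.Injective ((LinearMap.funLeft F F e).domRestrict C) := by
    rw [injective_iff_map_eq_zero]
    exact fun x hx =>
      Subtype.ext (eq_zero_of_comp_eq_zero ((support_subset_codeSupport x.2).trans hC) hx)
  rw [puncture, ← LinearMap.range_domRestrict, LinearMap.finrank_range_of_inj hinj]

theorem IsHermLCD.puncture {e : Fin m → Fin n} (he : Function.Injective e)
    {C : Submodule F (Fin n → F)} (hC : codeSupport C ⊆ Set.range e) (h : IsHermLCD q C) :
    IsHermLCD q (puncture e C) := by
  refine (Submodule.eq_bot_iff _).mpr ?_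
  rintro _ ⟨⟨x, hx, rfl⟩, hdual⟩
  have hx_dual : x ∈ hermDual q C := fun y hy =>
    hermInner_comp_of_support_subset_range he ((support_subset_codeSupport hx).trans hC) y ▸
      hdual _ (Submodule.mem_map_of_mem hy)
  have hx0 : x = 0 := (Submodule.eq_bot_iff _).mp h x ⟨hx, hx_dual⟩
  rw [hx0, map_zero]

theorem minWt.puncture {e : Fin m → Fin n} (he : Function.Injective e)
    {C : Submodule F (Fin n → F)} (hC : codeSupport C ⊆ Set.range e) (h : minWt C d) :
    minWt (puncture e C) d := by
  have hsupp {x : Fin n → F} (hx : x ∈ C) : Function.support x ⊆ Set.range e :=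
    (support_subset_codeSupport hx).trans hC
  have hwt {x : Fin n → F} (hx : x ∈ C) : wt (LinearMap.funLeft F F e x) = wt x :=
    wt_comp_of_support_subset_range he (hsupp hx)
  obtain ⟨⟨c, hc, hc0, hcd⟩, hmin⟩ := h
  refine ⟨⟨_, Submodule.mem_map_of_mem hc, fun h0 => hc0 (eq_zero_of_comp_eq_zero (hsupp hc) h0),
    (hwt hc).trans hcd⟩, ?_⟩
  rintro _ ⟨x, hx, rfl⟩ hx0
  rw [hwt hx]
  exact hmin x hx (ne_zero_of_map hx0)

end Codes

theorem stmt_15_general {F : Type*} [Field F] (q n k d₀ : ℕ)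
    (h : ∀ n' ≤ n, ¬ ∃ d' : ℕ, d₀ ≤ d' ∧
      ∃ C : Submodule F (Fin n' → F),
        Module.finrank F C = k ∧ IsHermLCD q C ∧ minWt C d' ∧
        dualDistGeTwo q C) :
    ¬ ∃ d : ℕ, d₀ ≤ d ∧
      ∃ C : Submodule F (Fin n → F),
        Module.finrank F C = k ∧ IsHermLCD q C ∧ minWt C d := by
  rintro ⟨d, hd, C, hk, hLCD, hmin⟩
  obtain ⟨m, e, he⟩ := (Set.toFinite (codeSupport C)).fin_embedding
  have hfull : codeSupport (puncture e C) = Set.univ := by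
    rw [codeSupport_puncture, ← he, Set.preimage_range]
  exact h m (Fin.le_of_injective e e.injective) ⟨d, hd, puncture e C,
    (finrank_puncture he.ge).trans hk, hLCD.puncture e.injective he.ge,
    hmin.puncture e.injective he.ge, dualDistGeTwo_of_codeSupport_eq_univ hfull⟩

theorem stmt_15 (n k d₀ : ℕ) (hk : 2 ≤ k) (hd₀ : 1 ≤ d₀)
    (h : ∀ n' ≤ n, ¬ ∃ d' : ℕ, d₀ ≤ d' ∧
      ∃ C : Submodule (GaloisField 2 2) (Fin n' → GaloisField 2 2),
        Module.finrank (GaloisField 2 2) C = k ∧ IsHermLCD 2 C ∧ minWt C d' ∧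
        dualDistGeTwo 2 C) :
    ¬ ∃ d : ℕ, d₀ ≤ d ∧
      ∃ C : Submodule (GaloisField 2 2) (Fin n → GaloisField 2 2),
        Module.finrank (GaloisField 2 2) C = k ∧ IsHermLCD 2 C ∧ minWt C d :=
  stmt_15_general 2 n k d₀ h
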